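/- Let C̄_A be the conic with homogeneous barycentric equation xy + xz + yz = x² with respect to ABC. Then C̄_A passes through B, C, E₀, F₀, is tangent to the line K⁻¹(AC) at B and tangent to the line K⁻¹(AB) at C, and the locus of points P for which the generalized orthocenter H of P equals A is exactly C̄_A ∖ {B, C, E₀, F₀}: every admissible point P with H = A lies on C̄_A, and conversely every point of C̄_A other than B, C, E₀, F₀ lies on no extended side of ABC or of K⁻¹(ABC), has a well-defined generalized orthocenter, and that generalized orthocenter equals A. -/

import Mathlib

noncomputable section

/-- The real affine plane. -/
abbrev Pt : Type := ℝ × ℝ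

/-- `u` and `v` are parallel vectors (the zero vector is parallel to everything). -/
def Par (u v : Pt) : Prop := ∃ t : ℝ, u = t • v ∨ v = t • u

/-- The centroid of the triangle `ABC`. -/
def cent (A B C : Pt) : Pt := (3⁻¹ : ℝ) • (A + B + C)

/-- The homothety with center `Z` and ratio `r`. -/
def homoth (Z : Pt) (r : ℝ) (X : Pt) : Pt := Z + r • (X - Z)

/-- The value at `p` of the quadratic polynomial with coefficient vector `c`. -/
def qval (c : Fin 6 → ℝ) (p : Pt) : ℝ :=
  c 0 * p.1 ^ 2 + c 1 * p.1 * p.2 + c 2 * p.2 ^ 2 + c 3 * p.1 + c 4 * p.2 + c 5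

/-- `S` is a conic: the zero locus of a real polynomial of total degree 2. -/
def IsConic (S : Set Pt) : Prop :=
  ∃ c : Fin 6 → ℝ, ¬(c 0 = 0 ∧ c 1 = 0 ∧ c 2 = 0) ∧ S = {p | qval c p = 0}

/-- `Z` is a center of symmetry of `S`. -/
def IsCenterOf (Z : Pt) (S : Set Pt) : Prop :=
  ∀ p ∈ S, (2 : ℝ) • Z - p ∈ S

/-- The gradient at `p` of the quadratic polynomial with coefficients `c`. -/
def qgrad (c : Fin 6 → ℝ) (p : Pt) : Pt :=
  (2 * c 0 * p.1 + c 1 * p.2 + c 3, c 1 * p.1 + 2 * c 2 * p.2 + c 4)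

/-- The line through `X` and `Y`. -/
def lineThru (X Y : Pt) : Set Pt := {p | ∃ t : ℝ, p = X + t • (Y - X)}

/-- `L` is the tangent line at the nonsingular point `p` of the conic with coefficients `c`. -/
def IsTangentLineAt (c : Fin 6 → ℝ) (L : Set Pt) (p : Pt) : Prop :=
  qval c p = 0 ∧ qgrad c p ≠ 0 ∧
  L = {q | (qgrad c p).1 * (q.1 - p.1) + (qgrad c p).2 * (q.2 - p.2) = 0}

/-- `P` does not lie on any extended side of `ABC` or of its anticomplementary triangle. -/
def Admissible (A B C P : Pt) : Prop :=
  ∃ x y z : ℝ, x + y + z = 1 ∧ P = x • A + y • B + z • C ∧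
    x ≠ 0 ∧ y ≠ 0 ∧ z ≠ 0 ∧ x ≠ 1 ∧ y ≠ 1 ∧ z ≠ 1

/-- `H` is a generalized orthocenter of the admissible point `P` with respect to `ABC`. -/
def IsGenOrtho (A B C P H : Pt) : Prop :=
  ∃ (x y z : ℝ) (P' Q D E F : Pt),
    x + y + z = 1 ∧ P = x • A + y • B + z • C ∧
    x ≠ 0 ∧ y ≠ 0 ∧ z ≠ 0 ∧ x ≠ 1 ∧ y ≠ 1 ∧ z ≠ 1 ∧
    x * y + y * z + z * x ≠ 0 ∧
    P' = (y * z / (x * y + y * z + z * x)) • A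
      + (x * z / (x * y + y * z + z * x)) • B
      + (x * y / (x * y + y * z + z * x)) • C ∧
    Q = homoth (cent A B C) (-(1 / 2)) P' ∧
    Collinear ℝ {A, P, D} ∧ Collinear ℝ {B, C, D} ∧
    Collinear ℝ {B, P, E} ∧ Collinear ℝ {A, C, E} ∧
    Collinear ℝ {C, P, F} ∧ Collinear ℝ {A, B, F} ∧
    Par (H - A) (D - Q) ∧ Par (H - B) (E - Q) ∧ Par (H - C) (F - Q)

/-- The cross product of two vectors of the plane. -/
def cross (u v : Pt) : ℝ := u.1 * v.2 - u.2 * v.1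

/-- Twice the signed area of the triangle `ABC`. -/
def area (A B C : Pt) : ℝ := cross (B - A) (C - A)

/-- The combination of `A`, `B`, `C` with weights `x`, `y`, `z`. -/
def bary (A B C : Pt) (x y z : ℝ) : Pt := x • A + y • B + z • C

theorem par_iff_cross_eq_zero (u v : Pt) : Par u v ↔ cross u v = 0 := by
  obtain ⟨a, b⟩ := u
  obtain ⟨c, d⟩ := v
  simp only [Par, cross, Prod.smul_mk, Prod.mk.injEq, smul_eq_mul]
  constructor
  · rintro ⟨t, ⟨rfl, rfl⟩ | ⟨rfl, rfl⟩⟩ <;> ring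
  · intro h
    by_cases hc : c = 0
    · by_cases hd : d = 0
      · exact ⟨0, Or.inr (by simp [hc, hd])⟩
      · exact ⟨b / d, Or.inl ⟨by field_simp; linarith, by field_simp⟩⟩
    · exact ⟨a / c, Or.inl ⟨by field_simp, by field_simp; linarith⟩⟩

theorem collinear_iff_cross_eq_zero (X Y Z : Pt) :
    Collinear ℝ {X, Y, Z} ↔ cross (Y - X) (Z - X) = 0 := by
  rw [collinear_iff_of_mem (p₀ := X) (by simp)]
  constructor
  · rintro ⟨v, hv⟩
    obtain ⟨r, rfl⟩ := hv Y (by simp)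
    obtain ⟨s, rfl⟩ := hv Z (by simp)
    simp [cross]
    ring
  · intro h
    obtain ⟨t, ht | ht⟩ := (par_iff_cross_eq_zero _ _).2 h
    · refine ⟨Z - X, ?_⟩
      simp only [Set.mem_insert_iff, Set.mem_singleton_iff, forall_eq_or_imp, forall_eq]
      exact ⟨⟨0, by simp⟩, ⟨t, by rw [← ht]; simp⟩, ⟨1, by simp⟩⟩
    · refine ⟨Y - X, ?_⟩
      simp only [Set.mem_insert_iff, Set.mem_singleton_iff, forall_eq_or_imp, forall_eq]
      exact ⟨⟨0, by simp⟩, ⟨1, by simp⟩, ⟨t, by rw [← ht]; simp⟩⟩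

theorem area_ne_zero {A B C : Pt} (h : AffineIndependent ℝ ![A, B, C]) : area A B C ≠ 0 := by
  rw [affineIndependent_iff_not_collinear_set, collinear_iff_cross_eq_zero] at h
  exact h

theorem bary_one_left (A B C : Pt) : bary A B C 1 0 0 = A := by simp [bary]

theorem bary_one_mid (A B C : Pt) : bary A B C 0 1 0 = B := by simp [bary]

theorem bary_one_right (A B C : Pt) : bary A B C 0 0 1 = C := by simp [bary]

theorem bary_sub_bary (A B C : Pt) (x y z x' y' z' : ℝ) :
    bary A B C x y z - bary A B C x' y' z' = bary A B C (x - x') (y - y') (z - z') := by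
  simp only [bary, sub_smul]
  abel

theorem cross_bary (A B C : Pt) {x y z x' y' z' : ℝ} (h : x + y + z = 0)
    (h' : x' + y' + z' = 0) :
    cross (bary A B C x y z) (bary A B C x' y' z') = (y * z' - z * y') * area A B C := by
  obtain rfl : x = -y - z := by linarith
  obtain rfl : x' = -y' - z' := by linarith
  simp only [cross, bary, area, Prod.fst_add, Prod.snd_add, Prod.smul_fst, Prod.smul_snd,
    Prod.fst_sub, Prod.snd_sub, smul_eq_mul]
  ring

theorem exists_eq_bary {A B C : Pt} (h : area A B C ≠ 0) (P : Pt) :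
    ∃ x y z : ℝ, x + y + z = 1 ∧ P = bary A B C x y z := by
  refine ⟨1 - cross (P - A) (C - A) / area A B C - cross (B - A) (P - A) / area A B C,
    cross (P - A) (C - A) / area A B C, cross (B - A) (P - A) / area A B C, by ring, ?_⟩
  ext <;> simp only [bary, Prod.fst_add, Prod.snd_add, Prod.smul_fst, Prod.smul_snd,
    smul_eq_mul] <;> field_simp <;>
    simp only [cross, area, Prod.fst_sub, Prod.snd_sub] <;> ring

theorem bary_injective {A B C : Pt} (h : area A B C ≠ 0) {x y z x' y' z' : ℝ}
    (hs : x + y + z = 1) (hs' : x' + y' + z' = 1)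
    (he : bary A B C x y z = bary A B C x' y' z') : x = x' ∧ y = y' ∧ z = z' := by
  have h0 : bary A B C (x - x') (y - y') (z - z') = 0 := by
    rw [← bary_sub_bary, he, sub_self]
  have hd : (x - x') + (y - y') + (z - z') = 0 := by linarith
  have hy := cross_bary A B C hd (show (-1 : ℝ) + 0 + 1 = 0 by norm_num)
  have hz := cross_bary A B C hd (show (-1 : ℝ) + 1 + 0 = 0 by norm_num)
  rw [h0] at hy hz
  simp [cross, h] at hy hz
  exact ⟨by linarith, by linarith, by linarith⟩

theorem homoth_cent_bary (A B C : Pt) (r : ℝ) (x y z : ℝ) :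
    homoth (cent A B C) r (bary A B C x y z) =
      bary A B C ((1 - r) / 3 + r * x) ((1 - r) / 3 + r * y) ((1 - r) / 3 + r * z) := by
  ext <;> simp only [homoth, cent, bary, Prod.fst_add, Prod.snd_add, Prod.smul_fst,
    Prod.smul_snd, Prod.fst_sub, Prod.snd_sub, smul_eq_mul] <;> ring

theorem collinear_bary_iff {A B C : Pt} (h : area A B C ≠ 0) {x y z x' y' z' x'' y'' z'' : ℝ}
    (hs : x + y + z = 1) (hs' : x' + y' + z' = 1) (hs'' : x'' + y'' + z'' = 1) :
    Collinear ℝ {bary A B C x y z, bary A B C x' y' z', bary A B C x'' y'' z''} ↔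
      (y' - y) * (z'' - z) = (z' - z) * (y'' - y) := by
  rw [collinear_iff_cross_eq_zero, bary_sub_bary, bary_sub_bary,
    cross_bary A B C (by linarith) (by linarith)]
  simp [h, sub_eq_zero]

theorem par_bary_iff {A B C : Pt} (h : area A B C ≠ 0)
    {x y z x' y' z' u v w u' v' w' : ℝ}
    (hs : x + y + z = 1) (hs' : x' + y' + z' = 1) (ht : u + v + w = 1)
    (ht' : u' + v' + w' = 1) :
    Par (bary A B C x y z - bary A B C x' y' z') (bary A B C u v w - bary A B C u' v' w') ↔
      (y - y') * (w - w') = (z - z') * (v - v') := by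
  rw [par_iff_cross_eq_zero, bary_sub_bary, bary_sub_bary,
    cross_bary A B C (by linarith) (by linarith)]
  simp [h, sub_eq_zero]

/-- The coefficients of the quadratic polynomial `XY + XZ + YZ - X²`, where `X`, `Y`, `Z`
are the barycentric coordinates of a point multiplied by the area of `ABC`. -/
def conicCoeff (A B C : Pt) : Fin 6 → ℝ :=
  let y₁ := C.2 - A.2
  let y₂ := A.1 - C.1
  let y₀ := A.2 * C.1 - A.1 * C.2
  let z₁ := A.2 - B.2
  let z₂ := B.1 - A.1
  let z₀ := A.1 * B.2 - A.2 * B.1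
  let x₁ := B.2 - C.2
  let x₂ := C.1 - B.1
  let x₀ := B.1 * C.2 - B.2 * C.1
  ![x₁ * y₁ + x₁ * z₁ + y₁ * z₁ - x₁ ^ 2,
    (x₁ * y₂ + x₂ * y₁) + (x₁ * z₂ + x₂ * z₁) + (y₁ * z₂ + y₂ * z₁) - 2 * x₁ * x₂,
    x₂ * y₂ + x₂ * z₂ + y₂ * z₂ - x₂ ^ 2,
    (x₁ * y₀ + x₀ * y₁) + (x₁ * z₀ + x₀ * z₁) + (y₁ * z₀ + y₀ * z₁) - 2 * x₁ * x₀,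
    (x₂ * y₀ + x₀ * y₂) + (x₂ * z₀ + x₀ * z₂) + (y₂ * z₀ + y₀ * z₂) - 2 * x₂ * x₀,
    x₀ * y₀ + x₀ * z₀ + y₀ * z₀ - x₀ ^ 2]

theorem qval_conicCoeff_bary (A B C : Pt) {x y z : ℝ} (hs : x + y + z = 1) :
    qval (conicCoeff A B C) (bary A B C x y z) =
      area A B C ^ 2 * (x * y + x * z + y * z - x ^ 2) := by
  obtain rfl : x = 1 - y - z := by linarith
  simp [qval, conicCoeff, bary, area, cross]
  ring

/-- The derivative of the polynomial at a point `(x : y : z)` towards a point `(u : v : w)`. -/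
theorem qgrad_conicCoeff_bary (A B C : Pt) {x y z u v w : ℝ} (hs : x + y + z = 1)
    (ht : u + v + w = 1) :
    (qgrad (conicCoeff A B C) (bary A B C x y z)).1 *
        ((bary A B C u v w).1 - (bary A B C x y z).1) +
      (qgrad (conicCoeff A B C) (bary A B C x y z)).2 *
        ((bary A B C u v w).2 - (bary A B C x y z).2) =
      area A B C ^ 2 * ((y + z - 2 * x) * (u - x) + (x + z) * (v - y) + (x + y) * (w - z)) := by
  obtain rfl : x = 1 - y - z := by linarith
  obtain rfl : u = 1 - v - w := by linarith
  simp [qgrad, conicCoeff, bary, area, cross]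
  ring

theorem conicCoeff_quadratic_ne_zero {A B C : Pt} (h : area A B C ≠ 0) :
    ¬(conicCoeff A B C 0 = 0 ∧ conicCoeff A B C 1 = 0 ∧ conicCoeff A B C 2 = 0) := by
  rintro ⟨h0, -, h2⟩
  have definite : ∀ a b : ℝ, 2 * a ^ 2 + 3 * a * b + 2 * b ^ 2 = 0 → a = 0 := by
    intro a b hab
    nlinarith [sq_nonneg (3 * a + 4 * b), sq_nonneg a]
  have hy : C.2 - A.2 = 0 := definite _ (A.2 - B.2) (by
    simp [conicCoeff] at h0; linarith)
  have hy' : A.1 - C.1 = 0 := definite _ (B.1 - A.1) (by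
    simp [conicCoeff] at h2; linarith)
  apply h
  simp only [area, cross, Prod.fst_sub, Prod.snd_sub]
  linear_combination (B.1 - A.1) * hy + (B.2 - A.2) * hy'

theorem mem_lineThru_bary_iff {A B C : Pt} (h : area A B C ≠ 0)
    {x y z x' y' z' u v w : ℝ} (hs : x + y + z = 1) (hs' : x' + y' + z' = 1)
    (ht : u + v + w = 1) :
    bary A B C u v w ∈ lineThru (bary A B C x y z) (bary A B C x' y' z') ↔
      ∃ t : ℝ, u = x + t * (x' - x) ∧ v = y + t * (y' - y) ∧ w = z + t * (z' - z) := by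
  have key : ∀ t : ℝ, bary A B C x y z + t • (bary A B C x' y' z' - bary A B C x y z) =
      bary A B C (x + t * (x' - x)) (y + t * (y' - y)) (z + t * (z' - z)) := by
    intro t
    simp only [bary]
    module
  refine exists_congr fun t => ?_
  rw [key]
  refine ⟨fun he => bary_injective h ht ?_ he, ?_⟩
  · linear_combination (1 - t) * hs + t * hs'
  · rintro ⟨rfl, rfl, rfl⟩
    rfl

theorem isTangentLineAt_mid {A B C : Pt} (h : area A B C ≠ 0) :
    IsTangentLineAt (conicCoeff A B C)
      (lineThru (homoth (cent A B C) (-2) A) (homoth (cent A B C) (-2) C)) B := by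
  have hA := homoth_cent_bary A B C (-2) 1 0 0
  have hC := homoth_cent_bary A B C (-2) 0 0 1
  rw [bary_one_left] at hA
  rw [bary_one_right] at hC
  have hB : (0 : ℝ) + 1 + 0 = 1 := by norm_num
  refine ⟨?_, fun h0 => ?_, ?_⟩
  · simpa [bary_one_mid] using qval_conicCoeff_bary A B C hB
  · have hg := qgrad_conicCoeff_bary A B C hB (show (1 : ℝ) + 0 + 0 = 1 by norm_num)
    rw [bary_one_mid, h0] at hg
    norm_num at hg
    exact pow_ne_zero 2 h hg.symm
  · ext q
    obtain ⟨u, v, w, ht, rfl⟩ := exists_eq_bary h q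
    have hg := qgrad_conicCoeff_bary A B C hB ht
    rw [bary_one_mid] at hg
    rw [Set.mem_ofPred_eq, hg, hA, hC,
      mem_lineThru_bary_iff h (by norm_num) (by norm_num) ht, mul_eq_zero,
      or_iff_right (pow_ne_zero 2 h)]
    constructor
    · rintro ⟨t, rfl, rfl, rfl⟩
      ring
    · intro hq
      exact ⟨(u + 1) / 2, by ring, by linarith, by linarith⟩

theorem isTangentLineAt_right {A B C : Pt} (h : area A B C ≠ 0) :
    IsTangentLineAt (conicCoeff A B C)
      (lineThru (homoth (cent A B C) (-2) A) (homoth (cent A B C) (-2) B)) C := by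
  have hA := homoth_cent_bary A B C (-2) 1 0 0
  have hB := homoth_cent_bary A B C (-2) 0 1 0
  rw [bary_one_left] at hA
  rw [bary_one_mid] at hB
  have hC : (0 : ℝ) + 0 + 1 = 1 := by norm_num
  refine ⟨?_, fun h0 => ?_, ?_⟩
  · simpa [bary_one_right] using qval_conicCoeff_bary A B C hC
  · have hg := qgrad_conicCoeff_bary A B C hC (show (1 : ℝ) + 0 + 0 = 1 by norm_num)
    rw [bary_one_right, h0] at hg
    norm_num at hg
    exact pow_ne_zero 2 h hg.symm
  · ext q
    obtain ⟨u, v, w, ht, rfl⟩ := exists_eq_bary h q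
    have hg := qgrad_conicCoeff_bary A B C hC ht
    rw [bary_one_right] at hg
    rw [Set.mem_ofPred_eq, hg, hA, hB,
      mem_lineThru_bary_iff h (by norm_num) (by norm_num) ht, mul_eq_zero,
      or_iff_right (pow_ne_zero 2 h)]
    constructor
    · rintro ⟨t, rfl, rfl, rfl⟩
      ring
    · intro hq
      exact ⟨(u + 1) / 2, by ring, by linarith, by linarith⟩

theorem eq_sq_of_isGenOrtho_self {A B C P : Pt} (h : area A B C ≠ 0)
    (hP : IsGenOrtho A B C P A) :
    ∃ x y z : ℝ, x + y + z = 1 ∧ P = bary A B C x y z ∧ x * y + x * z + y * z = x ^ 2 := by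
  obtain ⟨x, y, z, P', Q, D, E, F, hs, hPe, -, -, hz, -, -, -, hσ, hP', hQ, -, -, hE, hE',
    -, -, -, hBE, -⟩ := hP
  refine ⟨x, y, z, hs, hPe, ?_⟩
  obtain ⟨e₁, e₂, e₃, he, rfl⟩ := exists_eq_bary h E
  change P = bary A B C x y z at hPe
  change P' = bary A B C _ _ _ at hP'
  rw [hP', homoth_cent_bary] at hQ
  have hA : (1 : ℝ) + 0 + 0 = 1 := by norm_num
  have hB : (0 : ℝ) + 1 + 0 = 1 := by norm_num
  have hC : (0 : ℝ) + 0 + 1 = 1 := by norm_num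
  have cE := collinear_bary_iff h hB hs he
  have cE' := collinear_bary_iff h hA hC he
  have hQs : ((1 - -(1 / 2)) / 3 + -(1 / 2) * (y * z / (x * y + y * z + z * x))) +
      ((1 - -(1 / 2)) / 3 + -(1 / 2) * (x * z / (x * y + y * z + z * x))) +
      ((1 - -(1 / 2)) / 3 + -(1 / 2) * (x * y / (x * y + y * z + z * x))) = 1 := by
    have hsum : y * z / (x * y + y * z + z * x) + x * z / (x * y + y * z + z * x) +
        x * y / (x * y + y * z + z * x) = 1 := by
      rw [← add_div, ← add_div]
      exact (div_eq_one_iff_eq hσ).2 (by ring)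
    linarith
  have pE := par_bary_iff h hA hB he hQs
  simp only [bary_one_left, bary_one_mid, bary_one_right, ← hPe, ← hQ] at cE cE' pE
  have h₁ := cE.1 hE
  have h₂ := cE'.1 hE'
  have h₃ := pE.1 hBE
  obtain rfl : e₂ = 0 := by linarith
  have h₄ : 2 * (x * y + y * z + z * x) * e₃ = x * y + y * z + z * x - x * y := by
    have hqz : e₃ = 1 / 2 - 1 / 2 * (x * y / (x * y + y * z + z * x)) := by linarith
    rw [hqz]
    linear_combination -div_mul_cancel₀ (x * y) hσ
  have h₅ : z * (2 * (x * y + y * z + z * x)) = z * ((x + y) * (1 - y)) := by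
    linear_combination (1 - y) * h₄ + 2 * (x * y + y * z + z * x) * h₁
  linear_combination mul_left_cancel₀ hz h₅ - (x + y) * hs

theorem isGenOrtho_self_of_eq_sq {A B C : Pt} (h : area A B C ≠ 0) {x y z : ℝ}
    (hs : x + y + z = 1) (hx : x ≠ 0) (hy : y ≠ 0) (hz : z ≠ 0) (hx1 : x ≠ 1) (hy1 : y ≠ 1)
    (hz1 : z ≠ 1) (hq : x * y + x * z + y * z = x ^ 2) :
    IsGenOrtho A B C (bary A B C x y z) A := by
  have hσ : x * y + y * z + z * x = x ^ 2 := by linarith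
  have hx' : 1 - x ≠ 0 := sub_ne_zero.2 hx1.symm
  have hy' : 1 - y ≠ 0 := sub_ne_zero.2 hy1.symm
  have hz' : 1 - z ≠ 0 := sub_ne_zero.2 hz1.symm
  have hA : (1 : ℝ) + 0 + 0 = 1 := by norm_num
  have hB : (0 : ℝ) + 1 + 0 = 1 := by norm_num
  have hC : (0 : ℝ) + 0 + 1 = 1 := by norm_num
  have hD : 0 + y / (1 - x) + z / (1 - x) = 1 := by field_simp; linarith
  have hE : x / (1 - y) + 0 + z / (1 - y) = 1 := by field_simp; linarith
  have hF : x / (1 - z) + y / (1 - z) + 0 = 1 := by field_simp; linarith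
  have hQs : ((1 - -(1 / 2)) / 3 + -(1 / 2) * (y * z / x ^ 2)) +
      ((1 - -(1 / 2)) / 3 + -(1 / 2) * (x * z / x ^ 2)) +
      ((1 - -(1 / 2)) / 3 + -(1 / 2) * (x * y / x ^ 2)) = 1 := by
    field_simp
    linear_combination -3 * hq
  refine ⟨x, y, z, bary A B C _ _ _, _, bary A B C 0 (y / (1 - x)) (z / (1 - x)),
    bary A B C (x / (1 - y)) 0 (z / (1 - y)), bary A B C (x / (1 - z)) (y / (1 - z)) 0,
    hs, rfl, hx, hy, hz, hx1, hy1, hz1, by rw [hσ]; exact pow_ne_zero 2 hx, rfl, rfl, ?_⟩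
  rw [homoth_cent_bary, hσ]
  have c₁ := collinear_bary_iff h hA hs hD
  have c₂ := collinear_bary_iff h hB hC hD
  have c₃ := collinear_bary_iff h hB hs hE
  have c₄ := collinear_bary_iff h hA hC hE
  have c₅ := collinear_bary_iff h hC hs hF
  have c₆ := collinear_bary_iff h hA hB hF
  have p₁ := par_bary_iff h hA hA hD hQs
  have p₂ := par_bary_iff h hA hB hE hQs
  have p₃ := par_bary_iff h hA hC hF hQs
  simp only [bary_one_left, bary_one_mid, bary_one_right] at c₁ c₂ c₃ c₄ c₅ c₆ p₁ p₂ p₃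
  rw [c₁, c₂, c₃, c₄, c₅, c₆, p₁, p₂, p₃]
  refine ⟨?_, ?_, ?_, ?_, ?_, ?_, ?_, ?_, ?_⟩
  · field_simp
    linarith
  · field_simp
    linarith
  · field_simp
    linarith
  · field_simp
    linarith
  · field_simp
    linarith
  · field_simp
    linarith
  · ring
  · field_simp
    linear_combination -3 * hq - 3 * (x - y) * hs
  · field_simp
    linear_combination 3 * hq + 3 * (x - z) * hs

theorem midpoint_eq_bary_right_left (A B C : Pt) :
    midpoint ℝ C A = bary A B C (1 / 2) 0 (1 / 2) := by
  rw [midpoint_eq_smul_add, bary]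
  simp [add_comm]

theorem midpoint_eq_bary_left_mid (A B C : Pt) :
    midpoint ℝ A B = bary A B C (1 / 2) (1 / 2) 0 := by
  rw [midpoint_eq_smul_add, bary]
  simp

theorem locus_of_P_with_H_eq_A
    (A B C : Pt) (hABC : AffineIndependent ℝ ![A, B, C])
    (S : Set Pt)
    (hS : S = {p : Pt | ∃ x y z : ℝ, x + y + z = 1 ∧ p = x • A + y • B + z • C ∧
        x * y + x * z + y * z = x ^ 2}) :
    B ∈ S ∧ C ∈ S ∧ midpoint ℝ C A ∈ S ∧ midpoint ℝ A B ∈ S ∧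
    (∃ c : Fin 6 → ℝ, ¬(c 0 = 0 ∧ c 1 = 0 ∧ c 2 = 0) ∧ S = {p : Pt | qval c p = 0} ∧
      IsTangentLineAt c
        (lineThru (homoth (cent A B C) (-2) A) (homoth (cent A B C) (-2) C)) B ∧
      IsTangentLineAt c
        (lineThru (homoth (cent A B C) (-2) A) (homoth (cent A B C) (-2) B)) C) ∧
    (∀ P H : Pt, IsGenOrtho A B C P H → H = A → P ∈ S) ∧
    (∀ P : Pt, P ∈ S → P ≠ B → P ≠ C → P ≠ midpoint ℝ C A → P ≠ midpoint ℝ A B →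
      Admissible A B C P ∧ IsGenOrtho A B C P A) := by
  have h := area_ne_zero hABC
  have hmem : ∀ p, p ∈ S ↔ ∃ x y z : ℝ, x + y + z = 1 ∧ p = bary A B C x y z ∧
      x * y + x * z + y * z = x ^ 2 := by
    intro p
    rw [hS]
    rfl
  refine ⟨(hmem _).2 ⟨0, 1, 0, by norm_num, (bary_one_mid A B C).symm, by norm_num⟩,
    (hmem _).2 ⟨0, 0, 1, by norm_num, (bary_one_right A B C).symm, by norm_num⟩,
    (hmem _).2 ⟨_, _, _, by norm_num, midpoint_eq_bary_right_left A B C, by norm_num⟩,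
    (hmem _).2 ⟨_, _, _, by norm_num, midpoint_eq_bary_left_mid A B C, by norm_num⟩,
    ⟨conicCoeff A B C, conicCoeff_quadratic_ne_zero h, ?_, isTangentLineAt_mid h,
      isTangentLineAt_right h⟩, ?_, ?_⟩
  · ext p
    rw [hmem, Set.mem_ofPred_eq]
    constructor
    · rintro ⟨x, y, z, hs, rfl, hq⟩
      rw [qval_conicCoeff_bary A B C hs, hq, sub_self, mul_zero]
    · intro hp
      obtain ⟨x, y, z, hs, rfl⟩ := exists_eq_bary h p
      rw [qval_conicCoeff_bary A B C hs, mul_eq_zero, or_iff_right (pow_ne_zero 2 h),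
        sub_eq_zero] at hp
      exact ⟨x, y, z, hs, rfl, hp⟩
  · rintro P H hP rfl
    exact (hmem P).2 (eq_sq_of_isGenOrtho_self h hP)
  · intro P hP hB hC hE hF
    obtain ⟨x, y, z, hs, rfl, hq⟩ := (hmem P).1 hP
    rw [midpoint_eq_bary_right_left A B C] at hE
    rw [midpoint_eq_bary_left_mid A B C] at hF
    have hx : x ≠ 0 := by
      rintro rfl
      have hyz : y * z = 0 := by linarith
      rcases mul_eq_zero.1 hyz with rfl | rfl
      · obtain rfl : z = 1 := by linarith
        exact hC (bary_one_right A B C)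
      · obtain rfl : y = 1 := by linarith
        exact hB (bary_one_mid A B C)
    have hy : y ≠ 0 := by
      rintro rfl
      have hxz : z = x := mul_left_cancel₀ hx (by linarith)
      obtain rfl : x = 1 / 2 := by linarith
      exact hE (by rw [hxz])
    have hz : z ≠ 0 := by
      rintro rfl
      have hxy : y = x := mul_left_cancel₀ hx (by linarith)
      obtain rfl : x = 1 / 2 := by linarith
      exact hF (by rw [hxy])
    have hx1 : x ≠ 1 := by
      rintro rfl
      obtain rfl : z = -y := by linarith
      linarith [sq_nonneg y]
    have hy1 : y ≠ 1 := by
      rintro rfl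
      obtain rfl : z = -x := by linarith
      exact hx (by nlinarith)
    have hz1 : z ≠ 1 := by
      rintro rfl
      obtain rfl : y = -x := by linarith
      exact hx (by nlinarith)
    exact ⟨⟨x, y, z, hs, rfl, hx, hy, hz, hx1, hy1, hz1⟩,
      isGenOrtho_self_of_eq_sq h hs hx hy hz hx1 hy1 hz1 hq⟩
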